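/- arXiv:math/0501343 — 2 statements merged into one kernel-verified Lean document; each statement's English description precedes it below -/
import Mathlib

section
/- Let X, Y, Y' be locally finite topological spaces, f : X → Y and u : Y' → Y continuous maps, and let X' := {(y', x, p) | y' ∈ Y', x ∈ X, p a path in Y from u(y') to f(x)}, topologized as a subspace of Y' × X × C([0,1],Y), with projections u' : X' → X, (y',x,p) ↦ x, and f' : X' → Y', (y',x,p) ↦ y'. Assume X' is locally finite and that u is proper, i.e. the induced map π₀(u) : π₀(Y') → π₀(Y) has finite fibers. Then π₀(u') : π₀(X') → π₀(X) has finite fibers, and for every α : π₀(X) → ℚ with finite support one has u^*(f_!(α)) = f'_!((u')^*(α)) as functions on π₀(Y'), where for a proper map v the pullback v^*(β) := β ∘ π₀(v). -/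
open scoped unitInterval

/-- The homotopy fiber of `f : X → Y` at `y : Y`: pairs `(x, p)` with `p` a path
from `f x` to `y`, topologized as a subspace of `X × C(I, Y)`. -/
abbrev HomotopyFiber {X Y : Type*} [TopologicalSpace X] [TopologicalSpace Y]
    (f : X → Y) (y : Y) : Type _ :=
  {p : X × C(I, Y) // p.2 0 = f p.1 ∧ p.2 1 = y}

/-- The projection `i : F_y(f) → X`, `(x, p) ↦ x`. -/
def fiberIncl {X Y : Type*} [TopologicalSpace X] [TopologicalSpace Y]
    (f : X → Y) (y : Y) : HomotopyFiber f y → X :=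
  fun p => p.1.1

/-- A space is locally finite if all its homotopy groups `π_n`, `n ≥ 1`, at all base
points are finite, and at each base point all but finitely many of them are trivial. -/
def IsLocallyFinite (X : Type*) [TopologicalSpace X] : Prop :=
  ∀ x : X, (∀ n : ℕ, 1 ≤ n → Finite (HomotopyGroup (Fin n) X x)) ∧
    ∃ N : ℕ, ∀ n : ℕ, N < n → Subsingleton (HomotopyGroup (Fin n) X x)

/-- `μ(X, x) = ∏_{n ≥ 1} |π_n(X, x)|^{(-1)^n}`. -/
noncomputable def mu (X : Type*) [TopologicalSpace X] (x : X) : ℚ :=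
  ∏ᶠ n : ℕ, (Nat.card (HomotopyGroup (Fin (n + 1)) X x) : ℚ) ^ ((-1 : ℤ) ^ (n + 1))

/-- The path component of a point, as an element of `π₀(X)`. -/
def toPi0 {X : Type*} [TopologicalSpace X] (x : X) : ZerothHomotopy X :=
  Quotient.mk (pathSetoid X) x

/-- The map `π₀(f) : π₀(X) → π₀(Y)` induced by a continuous map. -/
def pi0Map {X Y : Type*} [TopologicalSpace X] [TopologicalSpace Y] {f : X → Y}
    (hf : Continuous f) : ZerothHomotopy X → ZerothHomotopy Y :=
  Quot.map f (fun _ _ h => ⟨h.somePath.map hf⟩)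


/-- The pushforward `f_!(α)` of a finitely supported function `α : π₀(X) → ℚ` along a
map `f : X → Y`. -/
noncomputable def pushforward {X Y : Type*} [TopologicalSpace X] [TopologicalSpace Y]
    (f : X → Y) (α : ZerothHomotopy X → ℚ) : ZerothHomotopy Y → ℚ :=
  fun c => ∑ᶠ z : ZerothHomotopy (HomotopyFiber f c.out),
    α (toPi0 (fiberIncl f c.out z.out)) * mu (HomotopyFiber f c.out) z.out

/-- The homotopy pullback `X' = {(y', x, p) | p : path from u(y') to f(x)}`,
topologized as a subspace of `Y' × X × C(I, Y)`. -/
abbrev PullbackSpace {X Y Y' : Type*} [TopologicalSpace X] [TopologicalSpace Y]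
    [TopologicalSpace Y'] (f : X → Y) (u : Y' → Y) : Type _ :=
  {q : Y' × X × C(I, Y) // q.2.2 0 = u q.1 ∧ q.2.2 1 = f q.2.1}

/-- The projection `u' : X' → X`. -/
def pbToX {X Y Y' : Type*} [TopologicalSpace X] [TopologicalSpace Y] [TopologicalSpace Y']
    (f : X → Y) (u : Y' → Y) : PullbackSpace f u → X :=
  fun q => q.1.2.1

/-- The projection `f' : X' → Y'`. -/
def pbToY' {X Y Y' : Type*} [TopologicalSpace X] [TopologicalSpace Y] [TopologicalSpace Y']
    (f : X → Y) (u : Y' → Y) : PullbackSpace f u → Y' :=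
  fun q => q.1.1

theorem continuous_pbToX {X Y Y' : Type*} [TopologicalSpace X] [TopologicalSpace Y]
    [TopologicalSpace Y'] (f : X → Y) (u : Y' → Y) : Continuous (pbToX f u) :=
  continuous_subtype_val.snd.fst

theorem continuous_pbToY' {X Y Y' : Type*} [TopologicalSpace X] [TopologicalSpace Y]
    [TopologicalSpace Y'] (f : X → Y) (u : Y' → Y) : Continuous (pbToY' f u) :=
  continuous_subtype_val.fst


/-! ### Homotopy groups: change of base point and homotopy invariance -/

namespace HGAux

/-- Projection of the real line onto the unit interval. -/
noncomputable def pr : ℝ → I := Set.projIcc (0 : ℝ) 1 zero_le_one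

@[fun_prop]
theorem continuous_pr : Continuous pr := continuous_projIcc

@[simp] theorem pr_coe (t : I) : pr (t : ℝ) = t := Set.projIcc_val zero_le_one t

theorem pr_of_nonpos {x : ℝ} (h : x ≤ 0) : pr x = 0 := Set.projIcc_of_le_left zero_le_one h

theorem pr_of_one_le {x : ℝ} (h : 1 ≤ x) : pr x = 1 := Set.projIcc_of_right_le zero_le_one h

@[simp] theorem pr_zero : pr 0 = 0 := pr_of_nonpos le_rfl
@[simp] theorem pr_one : pr 1 = 1 := pr_of_one_le le_rfl

theorem coe_pr {x : ℝ} (h0 : 0 ≤ x) (h1 : x ≤ 1) : (pr x : ℝ) = x := by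
  have := pr_coe ⟨x, h0, h1⟩
  simpa using congrArg Subtype.val this

set_option linter.unusedSectionVars false

variable {N : Type*} [Fintype N] {X : Type*} [TopologicalSpace X] {x y z : X}

/-- Scaled and clamped copy of a point of the cube. -/
noncomputable def cl (k : ℝ) (s : N → I) : N → I := fun i => pr (1 / 2 + k * ((s i : ℝ) - 1 / 2))

/-- Distance to the centre, normalised to be one on the boundary. -/
noncomputable def rad (s : N → I) : ℝ := ‖fun i => 2 * (s i : ℝ) - 1‖

@[fun_prop]
theorem continuous_cl : Continuous (fun q : ℝ × (N → I) => cl q.1 q.2) := by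
  unfold cl
  fun_prop

@[fun_prop]
theorem continuous_rad : Continuous (rad : (N → I) → ℝ) := by
  unfold rad
  fun_prop

theorem rad_nonneg (s : N → I) : 0 ≤ rad s := norm_nonneg _

theorem rad_le_one (s : N → I) : rad s ≤ 1 := by
  refine (pi_norm_le_iff_of_nonneg zero_le_one).2 fun i => ?_
  have h0 := (s i).2.1
  have h1 := (s i).2.2
  rw [Real.norm_eq_abs, abs_le]
  constructor <;> linarith

theorem rad_boundary {s : N → I} (hs : s ∈ Cube.boundary N) : rad s = 1 := by
  refine le_antisymm (rad_le_one s) ?_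
  obtain ⟨i, hi⟩ := hs
  have := norm_le_pi_norm (fun i => 2 * (s i : ℝ) - 1) i
  refine le_trans ?_ this
  rcases hi with hi | hi <;> simp [hi]
  norm_num

theorem cl_one (s : N → I) : cl 1 s = s := by
  funext i
  simp [cl]

theorem cl_boundary {k : ℝ} (hk : 0 ≤ k) {s : N → I} (h : 1 ≤ k * rad s) :
    cl k s ∈ Cube.boundary N := by
  have h1 : 1 ≤ ‖fun i => k * (2 * (s i : ℝ) - 1)‖ := by
    have : (fun i => k * (2 * (s i : ℝ) - 1)) = k • (fun i => (2 * (s i : ℝ) - 1)) := by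
      funext i; simp
    rw [this, norm_smul, Real.norm_eq_abs, abs_of_nonneg hk]
    exact h
  by_contra hb
  refine absurd h1 (not_le.2 ?_)
  refine (pi_norm_lt_iff one_pos).2 fun i => ?_
  by_contra hi
  rw [not_lt, Real.norm_eq_abs, le_abs] at hi
  refine hb ⟨i, ?_⟩
  rcases hi with hi | hi
  · right
    exact pr_of_one_le (by linarith)
  · left
    exact pr_of_nonpos (by linarith)

/-- Two generalized loops are freely homotopic along the path `p`. -/
def FH (p : Path x y) (γ : GenLoop N X x) (δ : GenLoop N X y) : Prop :=
  ∃ H : ContinuousMap.Homotopy γ.1 δ.1, ∀ t : I, ∀ s ∈ Cube.boundary N, H (t, s) = p t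

theorem FH.symm {p : Path x y} {γ : GenLoop N X x} {δ : GenLoop N X y} (h : FH p γ δ) :
    FH p.symm δ γ := by
  obtain ⟨H, hH⟩ := h
  exact ⟨H.symm, fun t s hs => by simp [ContinuousMap.Homotopy.symm_apply, hH _ s hs]⟩

theorem FH.trans {p : Path x y} {q : Path y z} {γ : GenLoop N X x} {δ : GenLoop N X y}
    {ε : GenLoop N X z} (h : FH p γ δ) (h' : FH q δ ε) : FH (p.trans q) γ ε := by
  obtain ⟨H, hH⟩ := h
  obtain ⟨K, hK⟩ := h'
  refine ⟨H.trans K, fun t s hs => ?_⟩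
  rw [ContinuousMap.Homotopy.trans_apply, Path.trans_apply]
  split_ifs
  · exact hH _ s hs
  · exact hK _ s hs

theorem FH.of_homotopic {γ δ : GenLoop N X x} (h : GenLoop.Homotopic γ δ) :
    FH (Path.refl x) γ δ := by
  obtain ⟨H⟩ := h
  exact ⟨H.toHomotopy, fun t s hs => (H.eq_fst t hs).trans (γ.2 s hs)⟩

theorem homotopic_of_FH_refl {γ δ : GenLoop N X x} (h : FH (Path.refl x) γ δ) :
    GenLoop.Homotopic γ δ := by
  obtain ⟨H, hH⟩ := h
  exact ⟨⟨H, fun t s hs => (hH t s hs).trans (γ.2 s hs).symm⟩⟩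

/-- The free homotopy that pushes the boundary along `p`. -/
noncomputable def pushFun (p : Path x y) (γ : GenLoop N X x) (q : I × (N → I)) : X :=
  if (1 + (q.1 : ℝ)) * rad q.2 ≤ 1 then γ (cl (1 + (q.1 : ℝ)) q.2)
  else p (pr ((1 + (q.1 : ℝ)) * rad q.2 - 1))

theorem continuous_pushFun (p : Path x y) (γ : GenLoop N X x) : Continuous (pushFun p γ) := by
  unfold pushFun
  refine Continuous.if_le ?_ ?_ (by fun_prop) (by fun_prop) ?_
  · exact γ.1.continuous.comp
      (continuous_cl.comp (g := fun q : ℝ × (N → I) => cl q.1 q.2)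
        (f := fun q : I × (N → I) => (1 + (q.1 : ℝ), q.2)) (by fun_prop))
  · fun_prop
  · intro q hq
    have : 0 ≤ 1 + (q.1 : ℝ) := by linarith [q.1.2.1]
    rw [GenLoop.boundary γ _ (cl_boundary this hq.ge), hq]
    simp

theorem pushFun_boundary (p : Path x y) (γ : GenLoop N X x) (t : I) {s : N → I}
    (hs : s ∈ Cube.boundary N) : pushFun p γ (t, s) = p t := by
  unfold pushFun
  simp only [rad_boundary hs, mul_one]
  split_ifs with h
  · have ht : t = 0 := le_antisymm (by
      have : (t : ℝ) ≤ 0 := by linarith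
      exact this) t.2.1
    subst ht
    simp only [Set.Icc.coe_zero, add_zero, cl_one]
    rw [GenLoop.boundary γ s hs]; simp
  · simp

theorem pushFun_zero (p : Path x y) (γ : GenLoop N X x) (s : N → I) :
    pushFun p γ (0, s) = γ s := by
  unfold pushFun
  simp [cl_one, rad_le_one]

/-- Transport of a generalized loop along a path. -/
noncomputable def push (p : Path x y) (γ : GenLoop N X x) : GenLoop N X y :=
  ⟨⟨fun s => pushFun p γ (1, s), (continuous_pushFun p γ).comp (by fun_prop)⟩, fun s hs => by
    simp [pushFun_boundary p γ 1 hs]⟩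

theorem FH_push (p : Path x y) (γ : GenLoop N X x) : FH p γ (push p γ) :=
  ⟨⟨⟨pushFun p γ, continuous_pushFun p γ⟩, pushFun_zero p γ, fun _ => rfl⟩,
    fun t _ hs => pushFun_boundary p γ t hs⟩

theorem homotopic_of_FH {q : Path x x} (hq : q.Homotopic (Path.refl x)) {γ δ : GenLoop N X x}
    (h : FH q γ δ) : GenLoop.Homotopic γ δ := by
  obtain ⟨Q⟩ := hq
  obtain ⟨H, hH⟩ := h
  have key : GenLoop.Homotopic (push (Path.refl x) γ) (push (Path.refl x) δ) := by
    apply homotopic_of_FH_refl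
    refine ⟨⟨⟨fun v : I × (N → I) => if 2 * rad v.2 ≤ 1 then H (v.1, cl 2 v.2)
      else Q (pr (2 * rad v.2 - 1), v.1), ?_⟩, ?_, ?_⟩, ?_⟩
    · refine Continuous.if_le ?_ ?_ (by fun_prop) (by fun_prop) ?_
      · exact H.continuous.comp (continuous_fst.prodMk
          (continuous_cl.comp (g := fun q : ℝ × (N → I) => cl q.1 q.2)
            (f := fun q : I × (N → I) => ((2 : ℝ), q.2)) (by fun_prop)))
      · exact Q.continuous.comp (by fun_prop)
      · intro v hv
        rw [hH _ _ (cl_boundary two_pos.le hv.ge), hv]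
        simp
    · intro s
      change (if _ then _ else _) = pushFun _ _ _
      simp only [pushFun, Set.Icc.coe_one, one_add_one_eq_two]
      split_ifs
      · exact H.apply_zero _
      · simp
    · intro s
      change (if _ then _ else _) = pushFun _ _ _
      simp only [pushFun, Set.Icc.coe_one, one_add_one_eq_two]
      split_ifs
      · exact H.apply_one _
      · simp
    · intro t s hs
      change (if _ then _ else _) = _
      rw [rad_boundary hs, if_neg (by norm_num)]
      norm_num
  exact ((homotopic_of_FH_refl (FH_push _ γ)).trans key).trans
    (homotopic_of_FH_refl (FH_push _ δ)).symm

theorem FH.congr {p : Path x y} {γ γ' : GenLoop N X x} {δ δ' : GenLoop N X y}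
    (h : FH p γ δ) (h' : FH p γ' δ') (hγ : GenLoop.Homotopic γ γ') : GenLoop.Homotopic δ δ' := by
  refine homotopic_of_FH ?_ ((h.symm.trans (FH.of_homotopic hγ)).trans h')
  have h1 : (p.symm.trans (Path.refl x)).Homotopic p.symm := ⟨Path.Homotopy.transRefl _⟩
  exact (h1.hcomp (Path.Homotopic.refl p)).trans ⟨(Path.Homotopy.reflSymmTrans p).symm⟩

/-- Transport of homotopy classes along a path. -/
noncomputable def pushPi (p : Path x y) : HomotopyGroup N X x → HomotopyGroup N X y :=
  Quotient.map (push p) fun γ δ h => (FH_push p γ).congr (FH_push p δ) h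

theorem pushPi_eq {p : Path x y} {γ : GenLoop N X x} {δ : GenLoop N X y} (h : FH p γ δ) :
    pushPi p (Quotient.mk _ γ) = Quotient.mk _ δ :=
  Quotient.sound ((FH_push p γ).congr h (GenLoop.Homotopic.refl γ))

theorem pushPi_symm_pushPi (p : Path x y) (c : HomotopyGroup N X x) :
    pushPi p.symm (pushPi p c) = c := by
  induction c using Quotient.inductionOn with
  | _ γ =>
    rw [pushPi_eq (FH_push p γ)]
    exact pushPi_eq (FH_push p γ).symm

theorem pushPi_bijective (p : Path x y) :
    Function.Bijective (pushPi p : HomotopyGroup N X x → HomotopyGroup N X y) :=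
  Function.bijective_iff_has_inverse.2 ⟨pushPi p.symm, pushPi_symm_pushPi p, fun c => by
    simpa using pushPi_symm_pushPi p.symm c⟩

variable {A B : Type*} [TopologicalSpace A] [TopologicalSpace B]

/-- Image of a generalized loop. -/
def mapLoop (e : C(A, B)) {a : A} (γ : GenLoop N A a) : GenLoop N B (e a) :=
  ⟨e.comp γ.1, fun s hs => congrArg e (γ.2 s hs)⟩

/-- The induced map on homotopy groups. -/
def mapPi (e : C(A, B)) (a : A) : HomotopyGroup N A a → HomotopyGroup N B (e a) :=
  Quotient.map (mapLoop e) fun _ _ h => ContinuousMap.HomotopicRel.comp_continuousMap h e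

theorem mapPi_comp_bijective (e : C(A, B)) (g : C(B, A))
    (h : (g.comp e).Homotopic (ContinuousMap.id A)) (a : A) :
    Function.Bijective
      ((mapPi g (e a) : HomotopyGroup N B (e a) → _) ∘ (mapPi e a : HomotopyGroup N A a → _)) := by
  obtain ⟨K⟩ := h
  let p : Path (g (e a)) a :=
    ⟨⟨fun t => K (t, a), by fun_prop⟩, K.apply_zero a, K.apply_one a⟩
  have key : (pushPi p : HomotopyGroup N A _ → _) ∘ (mapPi g (e a) ∘ mapPi e a) = id := by
    funext c
    induction c using Quotient.inductionOn with
    | _ γ =>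
      refine pushPi_eq (γ := mapLoop g (mapLoop e γ)) ?_
      refine ⟨⟨⟨fun q => K (q.1, γ q.2), ?_⟩, fun s => K.apply_zero _, fun s => K.apply_one _⟩,
        fun t s hs => ?_⟩
      · have := γ.1.continuous
        exact K.continuous.comp (continuous_fst.prodMk (this.comp continuous_snd))
      · change K (t, γ s) = K (t, a)
        rw [GenLoop.boundary γ s hs]
  have hb := pushPi_bijective (N := N) p
  exact (Function.Bijective.of_comp_iff' hb _).1 (key ▸ Function.bijective_id)

theorem mapPi_bijective (e : ContinuousMap.HomotopyEquiv A B) (a : A) :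
    Function.Bijective (mapPi e.toFun a : HomotopyGroup N A a → _) := by
  have h1 := mapPi_comp_bijective (N := N) e.toFun e.invFun e.left_inv a
  have h2 := mapPi_comp_bijective (N := N) e.invFun e.toFun e.right_inv (e.toFun a)
  have hg : Function.Bijective (mapPi e.invFun (e.toFun a) : HomotopyGroup N B _ → _) :=
    ⟨h2.1.of_comp, h1.2.of_comp⟩
  exact (Function.Bijective.of_comp_iff' hg _).1 h1

theorem mu_eq (e : ContinuousMap.HomotopyEquiv A B) {a : A} {b : B} (h : Joined (e.toFun a) b) :
    mu A a = mu B b := by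
  unfold mu
  refine finprod_congr fun n => ?_
  rw [Nat.card_congr ((Equiv.ofBijective _ (mapPi_bijective (N := Fin (n + 1)) e a)).trans
    (Equiv.ofBijective _ (pushPi_bijective h.somePath)))]

theorem pi0_eq {a b : A} : toPi0 a = toPi0 b ↔ Joined a b := Quotient.eq (r := pathSetoid A)

theorem joined_of_homotopic {e g : C(A, B)} (h : e.Homotopic g) (a : A) :
    Joined (e a) (g a) := by
  obtain ⟨K⟩ := h
  exact ⟨⟨⟨fun t => K (t, a), by fun_prop⟩, K.apply_zero a, K.apply_one a⟩⟩

theorem pi0Map_bijective (e : ContinuousMap.HomotopyEquiv A B) :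
    Function.Bijective (pi0Map e.toFun.continuous) := by
  refine Function.bijective_iff_has_inverse.2 ⟨pi0Map e.invFun.continuous, ?_, ?_⟩
  · rintro ⟨a⟩
    exact pi0_eq.2 (joined_of_homotopic e.left_inv a)
  · rintro ⟨a⟩
    exact pi0_eq.2 (joined_of_homotopic e.right_inv a)

theorem toPi0_out (c : ZerothHomotopy A) : toPi0 c.out = c := Quotient.out_eq c

end HGAux

/-! ### Homotopy fibres -/

namespace HGAux

variable {X Y Y' Z : Type*} [TopologicalSpace X] [TopologicalSpace Y] [TopologicalSpace Y']
  [TopologicalSpace Z]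

theorem pr_symm (x : ℝ) : unitInterval.symm (pr x) = pr (1 - x) := by
  rcases le_total x 0 with h | h
  · rw [pr_of_nonpos h, pr_of_one_le (by linarith)]; simp
  rcases le_total 1 x with h' | h'
  · rw [pr_of_one_le h', pr_of_nonpos (by linarith)]; simp
  · ext
    rw [unitInterval.coe_symm_eq, coe_pr h h', coe_pr (by linarith) (by linarith)]

theorem eq_zero_of_add_le {t : I} (h : 1 + (t : ℝ) ≤ 1) : t = 0 :=
  le_antisymm (by
    have : (t : ℝ) ≤ 0 := by linarith
    exact this) t.2.1

/-- A continuous map into the homotopy fibre. -/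
def mkFiber {f : X → Y} {y : Y} (a : Z → X) (ha : Continuous a) (g : Z × I → Y)
    (hg : Continuous g) (h0 : ∀ z, g (z, 0) = f (a z)) (h1 : ∀ z, g (z, 1) = y) :
    C(Z, HomotopyFiber f y) :=
  ⟨fun z => ⟨(a z, ContinuousMap.curry ⟨g, hg⟩ z), h0 z, h1 z⟩,
    (ha.prodMk (ContinuousMap.curry ⟨g, hg⟩).continuous).subtype_mk _⟩

/-- A continuous map into the homotopy pullback. -/
def mkPull {f : X → Y} {u : Y' → Y} (b : Z → Y') (hb : Continuous b)
    (a : Z → X) (ha : Continuous a) (g : Z × I → Y)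
    (hg : Continuous g) (h0 : ∀ z, g (z, 0) = u (b z)) (h1 : ∀ z, g (z, 1) = f (a z)) :
    C(Z, PullbackSpace f u) :=
  ⟨fun z => ⟨(b z, a z, ContinuousMap.curry ⟨g, hg⟩ z), h0 z, h1 z⟩,
    (hb.prodMk (ha.prodMk (ContinuousMap.curry ⟨g, hg⟩).continuous)).subtype_mk _⟩

/-- Shifting the homotopy fibre along a path in the base. -/
noncomputable def shift (f : X → Y) {y0 y1 : Y} (r : Path y0 y1) :
    C(HomotopyFiber f y0, HomotopyFiber f y1) :=
  mkFiber (fun z => z.1.1) (by fun_prop)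
    (fun q => if 2 * (q.2 : ℝ) ≤ 1 then q.1.1.2 (pr (2 * (q.2 : ℝ))) else
      r (pr (2 * (q.2 : ℝ) - 1)))
    (by
      refine Continuous.if_le (by fun_prop) (by fun_prop) (by fun_prop) (by fun_prop) ?_
      intro q hq
      simp [hq, q.1.2.2])
    (fun z => by simp [z.2.1])
    (fun z => by norm_num)

theorem shift_homotopic (f : X → Y) {y0 y1 : Y} (r : Path y0 y1) :
    ((shift f r.symm).comp (shift f r)).Homotopic (ContinuousMap.id _) := by
  refine ContinuousMap.Homotopic.symm ⟨⟨mkFiber (Z := I × HomotopyFiber f y0)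
    (fun z => z.2.1.1) (by fun_prop)
    (fun q => if (1 + (q.1.1 : ℝ)) * q.2 ≤ 1 then
        (if (1 + (q.1.1 : ℝ)) * (pr ((1 + (q.1.1 : ℝ)) * q.2)) ≤ 1 then
          q.1.2.1.2 (pr ((1 + (q.1.1 : ℝ)) * (pr ((1 + (q.1.1 : ℝ)) * q.2))))
          else r (pr ((1 + (q.1.1 : ℝ)) * (pr ((1 + (q.1.1 : ℝ)) * q.2)) - 1)))
        else r (pr (q.1.1 - ((1 + (q.1.1 : ℝ)) * q.2 - 1)))) ?_ ?_ ?_, ?_, ?_⟩⟩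
  · refine Continuous.if_le ?_ (by fun_prop) (by fun_prop) (by fun_prop) ?_
    · refine Continuous.if_le (by fun_prop) (by fun_prop) (by fun_prop) (by fun_prop) ?_
      intro q hq
      simp [hq, q.1.2.2.2]
    · intro q hq
      rw [hq]
      simp only [pr_one, Set.Icc.coe_one, mul_one, sub_self, sub_zero, pr_coe,
        add_sub_cancel_left]
      split_ifs with h
      · rw [eq_zero_of_add_le h]
        simp [q.1.2.2.2]
      · rfl
  · intro z
    simp [z.2.2.1]
  · intro z
    simp only [Set.Icc.coe_one, mul_one]
    split_ifs with h h'
    · rw [eq_zero_of_add_le h]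
      simp [z.2.2.2]
    · rw [eq_zero_of_add_le h]
      simp
    · simp
  · rintro ⟨⟨x, w⟩, h0, h1⟩
    refine Subtype.ext (Prod.ext rfl (ContinuousMap.ext fun s => ?_))
    have : (s : ℝ) ≤ 1 := s.2.2
    simp [mkFiber, this]
  · rintro ⟨⟨x, w⟩, h0, h1⟩
    refine Subtype.ext (Prod.ext rfl (ContinuousMap.ext fun s => ?_))
    have e : (1 : ℝ) - (2 * s - 1) = 1 + 1 - 2 * s := by ring
    simp [mkFiber, shift, one_add_one_eq_two, pr_symm]

/-- Homotopy fibres over the two ends of a path are homotopy equivalent. -/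
noncomputable def shiftEquiv (f : X → Y) {y0 y1 : Y} (r : Path y0 y1) :
    ContinuousMap.HomotopyEquiv (HomotopyFiber f y0) (HomotopyFiber f y1) where
  toFun := shift f r
  invFun := shift f r.symm
  left_inv := shift_homotopic f r
  right_inv := by simpa using shift_homotopic f r.symm

/-- Comparison from the fibre of the base change to the fibre. -/
noncomputable def bcTo (f : X → Y) {u : Y' → Y} (hu : Continuous u) (y' : Y') :
    C(HomotopyFiber (pbToY' f u) y', HomotopyFiber f (u y')) :=
  mkFiber (fun z => z.1.1.1.2.1) (by fun_prop)
    (fun q => if 2 * (q.2 : ℝ) ≤ 1 then q.1.1.1.1.2.2 (unitInterval.symm (pr (2 * (q.2 : ℝ)))) else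
      u (q.1.1.2 (pr (2 * (q.2 : ℝ) - 1))))
    (by
      refine Continuous.if_le (by fun_prop) (by fun_prop) (by fun_prop) (by fun_prop) ?_
      intro q hq
      simp [hq, q.1.2.1, q.1.1.1.2.1, pbToY'])
    (fun z => by simp [z.1.1.2.2])
    (fun z => by norm_num [z.2.2])

/-- Comparison from the fibre to the fibre of the base change. -/
noncomputable def bcFrom (f : X → Y) (u : Y' → Y) (y' : Y') :
    C(HomotopyFiber f (u y'), HomotopyFiber (pbToY' f u) y') :=
  mkFiber (mkPull (fun _ => y') continuous_const (fun z => z.1.1) (by fun_prop)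
      (fun q => q.1.1.2 (unitInterval.symm q.2)) (by fun_prop)
      (fun z => by simp [z.2.2]) (fun z => by simp [z.2.1]))
    (ContinuousMap.continuous _) (fun _ => y') continuous_const (fun _ => rfl) (fun _ => rfl)

theorem bc_right (f : X → Y) {u : Y' → Y} (hu : Continuous u) (y' : Y') :
    ((bcTo f hu y').comp (bcFrom f u y')).Homotopic (ContinuousMap.id _) := by
  refine ContinuousMap.Homotopic.symm ⟨⟨mkFiber (Z := I × HomotopyFiber f (u y'))
    (fun z => z.2.1.1) (by fun_prop)
    (fun q => if (1 + (q.1.1 : ℝ)) * q.2 ≤ 1 then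
        q.1.2.1.2 (pr ((1 + (q.1.1 : ℝ)) * q.2)) else u y') ?_ ?_ ?_, ?_, ?_⟩⟩
  · refine Continuous.if_le (by fun_prop) (by fun_prop) (by fun_prop) (by fun_prop) ?_
    intro q hq
    simp [hq, q.1.2.2.2]
  · intro z
    simp [z.2.2.1]
  · intro z
    simp only [Set.Icc.coe_one, mul_one]
    split_ifs with h
    · rw [eq_zero_of_add_le h]
      simp [z.2.2.2]
    · rfl
  · rintro ⟨⟨x, w⟩, h0, h1⟩
    refine Subtype.ext (Prod.ext rfl (ContinuousMap.ext fun s => ?_))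
    have : (s : ℝ) ≤ 1 := s.2.2
    simp [mkFiber, this]
  · rintro ⟨⟨x, w⟩, h0, h1⟩
    refine Subtype.ext (Prod.ext rfl (ContinuousMap.ext fun s => ?_))
    simp [mkFiber, mkPull, bcTo, bcFrom, one_add_one_eq_two]

theorem bc_left (f : X → Y) {u : Y' → Y} (hu : Continuous u) (y' : Y') :
    ((bcFrom f u y').comp (bcTo f hu y')).Homotopic (ContinuousMap.id _) := by
  refine ContinuousMap.Homotopic.symm ⟨⟨mkFiber (Z := I × HomotopyFiber (pbToY' f u) y')
    (mkPull (fun z => z.2.1.2 z.1) (by fun_prop) (fun z => z.2.1.1.1.2.1) (by fun_prop)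
      (fun q => if (1 + (q.1.1 : ℝ)) * (unitInterval.symm q.2) ≤ 1 then
        q.1.2.1.1.1.2.2 (unitInterval.symm (pr ((1 + (q.1.1 : ℝ)) * (unitInterval.symm q.2))))
        else u (q.1.2.1.2 (pr ((1 + (q.1.1 : ℝ)) * (unitInterval.symm q.2) - 1)))) ?_ ?_ ?_)
    (ContinuousMap.continuous _)
    (fun q => q.1.2.1.2 (max q.1.1 q.2)) (by fun_prop) ?_ ?_, ?_, ?_⟩⟩
  · refine Continuous.if_le (by fun_prop) (by fun_prop) (by fun_prop) (by fun_prop) ?_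
    intro q hq
    rw [hq]
    simp [q.1.2.2.1, q.1.2.1.1.2.1, pbToY']
  · intro z
    simp only [unitInterval.symm_zero, Set.Icc.coe_one, mul_one]
    split_ifs with h
    · rw [eq_zero_of_add_le h]
      simp [z.2.2.1, z.2.1.1.2.1, pbToY']
    · simp
  · intro z
    simp [z.2.1.1.2.2]
  · intro z
    simp [mkPull, pbToY']
  · intro z
    have : max z.1 1 = 1 := max_eq_right z.1.2.2
    simp [this, z.2.2.2]
  · rintro ⟨⟨⟨⟨b, x, p⟩, hp0, hp1⟩, w⟩, h0, h1⟩
    refine Subtype.ext (Prod.ext (Subtype.ext (Prod.ext h0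
      (Prod.ext rfl (ContinuousMap.ext fun s => ?_)))) (ContinuousMap.ext fun s => ?_))
    · have : 0 ≤ (s : ℝ) := s.2.1
      simp [mkFiber, mkPull, this, pr_symm]
    · simp [mkFiber]
  · rintro ⟨⟨⟨⟨b, x, p⟩, hp0, hp1⟩, w⟩, h0, h1⟩
    refine Subtype.ext (Prod.ext (Subtype.ext (Prod.ext h1
      (Prod.ext rfl (ContinuousMap.ext fun s => ?_)))) (ContinuousMap.ext fun s => ?_))
    · simp [mkFiber, mkPull, bcTo, bcFrom, one_add_one_eq_two]
      rfl
    · have : max 1 s = 1 := max_eq_left s.2.2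
      simpa [mkFiber, bcTo, bcFrom, this] using h1

/-- The fibre of the base change is homotopy equivalent to the fibre. -/
noncomputable def bcEquiv (f : X → Y) {u : Y' → Y} (hu : Continuous u) (y' : Y') {y : Y}
    (r : Path (u y') y) :
    ContinuousMap.HomotopyEquiv (HomotopyFiber (pbToY' f u) y') (HomotopyFiber f y) :=
  (ContinuousMap.HomotopyEquiv.mk (bcTo f hu y') (bcFrom f u y') (bc_left f hu y')
    (bc_right f hu y')).trans (shiftEquiv f r)

theorem fiberIncl_bcEquiv (f : X → Y) {u : Y' → Y} (hu : Continuous u) (y' : Y') {y : Y}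
    (r : Path (u y') y) (z : HomotopyFiber (pbToY' f u) y') :
    fiberIncl f y ((bcEquiv f hu y' r).toFun z) = pbToX f u (fiberIncl (pbToY' f u) y' z) := rfl

theorem joined_map {g : X → Y} (hg : Continuous g) {a b : X} (h : Joined a b) :
    Joined (g a) (g b) := ⟨h.somePath.map hg⟩

theorem base_change (f : X → Y) {u : Y' → Y} (hu : Continuous u) (α : ZerothHomotopy X → ℚ) :
    (pushforward f α) ∘ pi0Map hu =
        pushforward (pbToY' f u) (α ∘ pi0Map (continuous_pbToX f u)) := by
  funext c'
  have hj : Joined (u c'.out) (pi0Map hu c').out := by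
    rw [← pi0_eq, toPi0_out]
    conv_rhs => rw [← toPi0_out c']
    rfl
  set e := bcEquiv f hu c'.out hj.somePath with he
  symm
  refine finsum_eq_of_bijective _ (pi0Map_bijective e) fun z => ?_
  have hz : Joined (e.toFun z.out) (pi0Map e.toFun.continuous z).out := by
    rw [← pi0_eq, toPi0_out]
    conv_rhs => rw [← toPi0_out z]
    rfl
  rw [mu_eq e hz]
  congr 1
  change α (toPi0 (pbToX f u (fiberIncl (pbToY' f u) _ z.out))) = _
  rw [← fiberIncl_bcEquiv f hu _ hj.somePath]
  congr 1
  rw [pi0_eq]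
  have hc : Continuous (fiberIncl f (pi0Map hu c').out) := by unfold fiberIncl; fun_prop
  exact joined_map hc hz

theorem finite_quotient (hY : IsLocallyFinite Y) (a b : Y) :
    Finite (Path.Homotopic.Quotient a b) := by
  have h1 : Finite (HomotopyGroup (Fin 1) Y a) := (hY a).1 1 le_rfl
  have h2 : Finite (Path.Homotopic.Quotient a a) :=
    Finite.of_equiv _ (HomotopyGroup.pi1EquivFundamentalGroup (X := Y) (x := a))
  rcases isEmpty_or_nonempty (Path.Homotopic.Quotient a b) with h | h0
  · infer_instance
  · obtain ⟨p0⟩ := h0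
    refine Finite.of_injective (fun q => Path.Homotopic.Quotient.trans q
      (Path.Homotopic.Quotient.symm p0)) ?_
    intro q q' h
    have := congrArg (fun w => Path.Homotopic.Quotient.trans w p0) h
    simpa using this

/-- A point of the homotopy pullback. -/
def pt (f : X → Y) (u : Y' → Y) (b : Y') (x : X) (p : Path (u b) (f x)) : PullbackSpace f u :=
  ⟨(b, x, p.toContinuousMap), p.source, p.target⟩

theorem pt_joined (f : X → Y) (u : Y' → Y) (b : Y') (x : X) {p q : Path (u b) (f x)}
    (h : p.Homotopic q) : Joined (pt f u b x p) (pt f u b x q) := by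
  obtain ⟨H⟩ := h
  let g : C(I, PullbackSpace f u) := mkPull (fun _ => b) continuous_const (fun _ => x)
    continuous_const H H.continuous (fun z => by simp) (fun z => by simp)
  refine ⟨⟨g, ?_, ?_⟩⟩
  · refine Subtype.ext (Prod.ext rfl (Prod.ext rfl (ContinuousMap.ext fun s => ?_)))
    exact H.apply_zero s
  · refine Subtype.ext (Prod.ext rfl (Prod.ext rfl (ContinuousMap.ext fun s => ?_)))
    exact H.apply_one s

theorem exists_joined {f : X → Y} (hf : Continuous f) {u : Y' → Y} (hu : Continuous u)
    (q : PullbackSpace f u) {b : Y'} {x : X} (hb : Joined q.1.1 b) (hx : Joined q.1.2.1 x) :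
    ∃ p : Path (u b) (f x), Joined q (pt f u b x p) := by
  obtain ⟨β⟩ := hb
  obtain ⟨a⟩ := hx
  obtain ⟨⟨b0, x0, p⟩, h0, h1⟩ := q
  dsimp only at h0 h1 β a
  let g : C(I, PullbackSpace f u) := mkPull (fun t => β t) (by fun_prop) (fun t => a t)
    (by fun_prop)
    (fun v => if (v.2 : ℝ) * (1 + 2 * v.1) - v.1 ≤ 1 then
      (if 0 ≤ (v.2 : ℝ) * (1 + 2 * v.1) - v.1 then p (pr ((v.2 : ℝ) * (1 + 2 * v.1) - v.1))
        else u (β (pr (-((v.2 : ℝ) * (1 + 2 * v.1) - v.1)))))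
      else f (a (pr ((v.2 : ℝ) * (1 + 2 * v.1) - v.1 - 1))))
    (by
      refine Continuous.if_le ?_ (by fun_prop) (by fun_prop) (by fun_prop) ?_
      · refine Continuous.if_le (by fun_prop) (by fun_prop) (by fun_prop) (by fun_prop) ?_
        intro v hv
        rw [← hv]
        simp [h0]
      · intro v hv
        rw [hv]
        simp [h1])
    (fun t => by
      have ht0 : 0 ≤ (t : ℝ) := t.2.1
      have : -(t : ℝ) ≤ 1 := by linarith
      simp only [Set.Icc.coe_zero, zero_mul, zero_sub, neg_neg, pr_coe, this, if_true]
      split_ifs with h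
      · have ht : t = 0 := eq_zero_of_add_le (by linarith)
        subst ht
        simp [h0]
      · rfl)
    (fun t => by
      have ht0 : 0 ≤ (t : ℝ) := t.2.1
      have e : (1 : ℝ) * (1 + 2 * t) - t = 1 + t := by ring
      simp only [Set.Icc.coe_one, e, add_sub_cancel_left, pr_coe]
      split_ifs with h h'
      · rw [eq_zero_of_add_le h]
        simp [h1]
      · exact absurd (by linarith) h'
      · rfl)
  have hg1 : (g 1).1.1 = b := β.target
  have hg2 : (g 1).1.2.1 = x := a.target
  refine ⟨⟨(g 1).1.2.2, ?_, ?_⟩, ⟨⟨g, ?_, ?_⟩⟩⟩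
  · exact (g 1).2.1.trans (congrArg u hg1)
  · exact (g 1).2.2.trans (congrArg f hg2)
  · refine Subtype.ext (Prod.ext β.source (Prod.ext a.source (ContinuousMap.ext fun s => ?_)))
    have hs0 : 0 ≤ (s : ℝ) := s.2.1
    have hs1 : (s : ℝ) ≤ 1 := s.2.2
    simp [g, mkPull, hs0, hs1]
  · exact Subtype.ext (Prod.ext hg1 (Prod.ext hg2 rfl))

theorem proper (hY : IsLocallyFinite Y)
    {f : X → Y} (hf : Continuous f) {u : Y' → Y} (hu : Continuous u)
    (huprop : ∀ c : ZerothHomotopy Y, {c' : ZerothHomotopy Y' | pi0Map hu c' = c}.Finite)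
    (d : ZerothHomotopy X) :
      {d' : ZerothHomotopy (PullbackSpace f u) |
        pi0Map (continuous_pbToX f u) d' = d}.Finite := by
  have hfin : ∀ c' : ZerothHomotopy Y',
      (Set.range fun p : Path (u c'.out) (f d.out) => toPi0 (pt f u c'.out d.out p)).Finite := by
    intro c'
    have := finite_quotient hY (u c'.out) (f d.out)
    let F : Path.Homotopic.Quotient (u c'.out) (f d.out) → ZerothHomotopy (PullbackSpace f u) :=
      Quotient.lift (fun p => toPi0 (pt f u c'.out d.out p))
        fun p q h => pi0_eq.2 (pt_joined f u _ _ h)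
    refine (Set.finite_range F).subset ?_
    rintro _ ⟨p, rfl⟩
    exact ⟨Quotient.mk _ p, rfl⟩
  refine ((huprop (toPi0 (f d.out))).biUnion fun c' _ => hfin c').subset ?_
  rintro ⟨q⟩ hq
  have hx : Joined q.1.2.1 d.out := by
    rw [← pi0_eq, toPi0_out]
    exact hq
  have hb : Joined q.1.1 (toPi0 q.1.1).out := by
    rw [← pi0_eq, toPi0_out]
  obtain ⟨p, hp⟩ := exists_joined hf hu q hb hx
  refine Set.mem_biUnion (x := toPi0 q.1.1) ?_ ⟨p, (pi0_eq.2 hp).symm⟩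
  change toPi0 (u q.1.1) = toPi0 (f d.out)
  rw [pi0_eq]
  exact Joined.trans ⟨⟨q.1.2.2, q.2.1, q.2.2⟩⟩ (joined_map hf hx)

end HGAux

theorem statement3 {X Y Y' : Type*} [TopologicalSpace X] [TopologicalSpace Y]
    [TopologicalSpace Y']
    (hX : IsLocallyFinite X) (hY : IsLocallyFinite Y) (hY' : IsLocallyFinite Y')
    {f : X → Y} (hf : Continuous f) {u : Y' → Y} (hu : Continuous u)
    (hX' : IsLocallyFinite (PullbackSpace f u))
    -- `u` is proper: `π₀(u)` has finite fibers
    (huprop : ∀ c : ZerothHomotopy Y, {c' : ZerothHomotopy Y' | pi0Map hu c' = c}.Finite) :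
    -- `u'` is proper
    (∀ d : ZerothHomotopy X,
      {d' : ZerothHomotopy (PullbackSpace f u) |
        pi0Map (continuous_pbToX f u) d' = d}.Finite) ∧
    -- base change formula `u^*(f_!(α)) = f'_!((u')^*(α))`
    ∀ α : ZerothHomotopy X → ℚ, (Function.support α).Finite →
      (pushforward f α) ∘ pi0Map hu =
        pushforward (pbToY' f u) (α ∘ pi0Map (continuous_pbToX f u)) := by
  exact ⟨HGAux.proper hY hf hu huprop, fun α _ => HGAux.base_change f hu α⟩
end

section
/- Let 𝒜 be an abelian category in which Ext groups are defined and such that Ext²(a,b) = 0 for all objects a, b of 𝒜 (𝒜 is hereditary). Then every bounded cochain complex K over 𝒜 (say with K^n = 0 for n outside an interval [a,b]) is isomorphic in the derived category D(𝒜) to the finite direct sum ⊕_{n=a}^{b} single(H^n(K))[−n], where H^n(K) is the n-th cohomology object of K. -/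
open CategoryTheory CategoryTheory.Limits

universe w v u

/-- In any degree `n`, the cohomology of `K` is seen by a complex in degrees `n-1`, `n`. -/
lemma exists_two_term {C : Type u} [Category.{v} C] [Abelian C]
    (K : CochainComplex C ℤ) (n : ℤ) :
    ∃ (D : CochainComplex C ℤ) (φ : D ⟶ K), D.IsStrictlyGE (n - 1) ∧ D.IsStrictlyLE n ∧
      IsIso (HomologicalComplex.homologyMap φ n) := by
  have hr : (ComplexShape.up ℤ).Rel (n - 1) n := by simp
  have hne : n - 1 ≠ n := by lia
  let L := K.truncLE n
  have hL : IsZero (L.X (n + 1)) := L.isZero_of_isStrictlyLE n (n + 1) (by lia)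
  let D : CochainComplex C ℤ := HomologicalComplex.double (L.d (n - 1) n) hr
  let φ : D ⟶ L := HomologicalComplex.mkHomFromDouble hr hne (𝟙 _) (𝟙 _) (by simp) (by
    intro k hk
    obtain rfl : n + 1 = k := hk
    exact hL.eq_of_tgt _ _)
  have hD : IsZero (D.X (n + 1)) :=
    HomologicalComplex.isZero_double_X _ _ _ (by lia) (by lia)
  have h1 : QuasiIsoAt φ n := by
    rw [quasiIsoAt_iff' φ (n - 1) n (n + 1) (by simp) (by simp)]
    have : IsIso (φ.f (n - 1)) := by
      simp only [φ, HomologicalComplex.mkHomFromDouble_f₀]; infer_instance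
    have : IsIso (φ.f n) := by
      simp only [φ, HomologicalComplex.mkHomFromDouble_f₁]; infer_instance
    have : Mono (φ.f (n + 1)) := ⟨fun _ _ _ => hD.eq_of_tgt _ _⟩
    let ψ := (HomologicalComplex.shortComplexFunctor' C (ComplexShape.up ℤ) (n - 1) n (n + 1)).map φ
    have : Epi ψ.τ₁ := inferInstanceAs (Epi (φ.f (n - 1)))
    have : IsIso ψ.τ₂ := inferInstanceAs (IsIso (φ.f n))
    have : Mono ψ.τ₃ := inferInstanceAs (Mono (φ.f (n + 1)))
    exact ShortComplex.quasiIso_of_epi_of_isIso_of_mono ψ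
  have h2 : QuasiIsoAt (K.ιTruncLE n) n := K.quasiIsoAt_ιTruncLE n n le_rfl
  refine ⟨D, φ ≫ K.ιTruncLE n, ?_, ?_, ?_⟩
  · rw [CochainComplex.isStrictlyGE_iff]
    intro i hi
    exact HomologicalComplex.isZero_double_X _ _ _ (by lia) (by lia)
  · rw [CochainComplex.isStrictlyLE_iff]
    intro i hi
    exact HomologicalComplex.isZero_double_X _ _ _ (by lia) (by lia)
  · infer_instance

open DerivedCategory Pretriangulated in
/-- Under heredity, an object with cohomology in degrees `n-1`, `n` receives a map from
a single object in degree `n` inducing an isomorphism on `H^n`. -/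
lemma exists_section {C : Type u} [Category.{v} C] [Abelian C] [HasDerivedCategory.{w} C]
    (hhered : ∀ a b : C, Subsingleton
      ((DerivedCategory.singleFunctor C 0).obj a ⟶
        (((DerivedCategory.singleFunctor C 0).obj b)⟦(2 : ℤ)⟧)))
    (X : DerivedCategory C) (n : ℤ) [X.IsGE (n - 1)] [X.IsLE n] :
    ∃ (Y : C) (s : (singleFunctor C n).obj Y ⟶ X),
      IsIso ((homologyFunctor C n).map s) := by
  obtain ⟨A, B, hA, hB, f, g, δ, hT⟩ :=
    (TStructure.t (C := C)).exists_triangle X (n - 1) n (by lia)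
  have hA1 : A.IsLE (n - 1) := ⟨hA⟩
  have hB1 : B.IsGE n := ⟨hB⟩
  have hA2 : A.IsGE (n - 1) := by
    rw [isGE_iff]
    intro i hi
    exact (HomologySequence.exact₁ _ hT (i - 1) i).isZero_of_both_zeros
      ((isZero_of_isGE B n (i - 1) (by lia)).eq_of_src _ _)
      ((isZero_of_isGE X (n - 1) i hi).eq_of_tgt _ _)
  have hB2 : B.IsLE n := by
    rw [isLE_iff]
    intro i hi
    exact (HomologySequence.exact₃ _ hT i (i + 1)).isZero_of_both_zeros
      ((isZero_of_isLE X n i hi).eq_of_src _ _)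
      ((isZero_of_isLE A (n - 1) (i + 1) (by lia)).eq_of_tgt _ _)
  obtain ⟨a, ⟨ea⟩⟩ := exists_iso_singleFunctor_obj_of_isGE_of_isLE A (n - 1)
  obtain ⟨b, ⟨eb⟩⟩ := exists_iso_singleFunctor_obj_of_isGE_of_isLE B n
  have hδ : δ = 0 := by
    apply (shiftFunctor (DerivedCategory C) n).map_injective
    let e1 : B⟦n⟧ ≅ (singleFunctor C 0).obj b :=
      (shiftFunctor _ n).mapIso eb ≪≫ ((singleFunctors C).shiftIso n 0 n (by lia)).app b
    let e2 : A⟦(1 : ℤ)⟧⟦n⟧ ≅ ((singleFunctor C 0).obj a)⟦(2 : ℤ)⟧ :=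
      ((shiftFunctorAdd' (DerivedCategory C) 1 n (1 + n) rfl).app A).symm ≪≫
      (shiftFunctorAdd' (DerivedCategory C) (n - 1) 2 (1 + n) (by lia)).app A ≪≫
      (shiftFunctor _ (2 : ℤ)).mapIso ((shiftFunctor _ (n - 1)).mapIso ea ≪≫
        ((singleFunctors C).shiftIso (n - 1) 0 (n - 1) (by lia)).app a)
    have := (hhered b a).elim (e1.inv ≫ (shiftFunctor _ n).map δ ≫ e2.hom)
      (e1.inv ≫ (shiftFunctor _ n).map 0 ≫ e2.hom)
    simpa using this
  obtain ⟨s, hs⟩ : ∃ s : B ⟶ X, 𝟙 B = s ≫ g :=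
    Triangle.coyoneda_exact₃ _ hT (𝟙 B) (by subst hδ; exact comp_zero)
  have hg : IsIso ((homologyFunctor C n).map g) := by
    have h1 : Mono ((homologyFunctor C n).map g) :=
      (HomologySequence.mono_homologyMap_mor₂_iff _ hT n).2
        ((isZero_of_isLE A (n - 1) n (by lia)).eq_of_src _ _)
    have h2 : Epi ((homologyFunctor C n).map g) :=
      (HomologySequence.epi_homologyMap_mor₂_iff _ hT n (n + 1)).2
        ((isZero_of_isLE A (n - 1) (n + 1) (by lia)).eq_of_tgt _ _)
    exact isIso_of_mono_of_epi _
  have hs' : (homologyFunctor C n).map s ≫ (homologyFunctor C n).map g = 𝟙 _ := by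
    rw [← Functor.map_comp, ← hs, CategoryTheory.Functor.map_id]
  have : IsIso ((homologyFunctor C n).map s) :=
    IsIso.of_isIso_fac_right hs'
  refine ⟨b, eb.inv ≫ s, ?_⟩
  rw [Functor.map_comp]
  infer_instance

open DerivedCategory in
lemma exists_map_from_homology
    {C : Type u} [Category.{v} C] [Abelian C] [HasDerivedCategory.{w} C]
    (hhered : ∀ a b : C, Subsingleton
      ((DerivedCategory.singleFunctor C 0).obj a ⟶
        (((DerivedCategory.singleFunctor C 0).obj b)⟦(2 : ℤ)⟧)))
    (K : CochainComplex C ℤ) (n : ℤ) :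
    ∃ s : ((singleFunctor C 0).obj (K.homology n))⟦-n⟧ ⟶ Q.obj K,
      IsIso ((homologyFunctor C n).map s) := by
  obtain ⟨D, φ, hD1, hD2, hφ⟩ := exists_two_term K n
  obtain ⟨Y, s, hs⟩ := exists_section hhered (Q.obj D) n
  have hQ : IsIso ((homologyFunctor C n).map (Q.map φ)) :=
    (NatIso.isIso_map_iff (homologyFunctorFactors C n) φ).2 hφ
  have h3 : IsIso ((homologyFunctor C n).map (s ≫ Q.map φ)) := by
    rw [Functor.map_comp]; infer_instance
  let e : K.homology n ≅ Y :=
    ((homologyFunctorFactors C n).app K).symm ≪≫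
      (asIso ((homologyFunctor C n).map (s ≫ Q.map φ))).symm ≪≫
      (singleFunctorCompHomologyFunctorIso C n).app Y
  refine ⟨(((singleFunctors C).shiftIso (-n) n 0 (by lia)).app (K.homology n)).hom ≫
    (singleFunctor C n).map e.hom ≫ s ≫ Q.map φ, ?_⟩
  rw [Functor.map_comp, Functor.map_comp]
  infer_instance

open DerivedCategory in
lemma isZero_homology_shift_single
    {C : Type u} [Category.{v} C] [Abelian C] [HasDerivedCategory.{w} C]
    (Y : C) (n m : ℤ) (h : n ≠ m) :
    IsZero ((homologyFunctor C m).obj (((singleFunctor C 0).obj Y)⟦-n⟧)) := by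
  refine IsZero.of_iso ?_ ((homologyFunctor C m).mapIso
    (((singleFunctors C).shiftIso (-n) n 0 (by lia)).app Y))
  rcases lt_or_gt_of_ne h with h | h
  · exact isZero_of_isLE ((singleFunctor C n).obj Y) n m h
  · exact isZero_of_isGE ((singleFunctor C n).obj Y) n m h

theorem statement12 {C : Type u} [Category.{v} C] [Abelian C] [HasDerivedCategory.{w} C]
    (hhered : ∀ a b : C, Subsingleton
      ((DerivedCategory.singleFunctor C 0).obj a ⟶
        (((DerivedCategory.singleFunctor C 0).obj b)⟦(2 : ℤ)⟧)))
    (K : CochainComplex C ℤ) (a b : ℤ)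
    (hK : ∀ n : ℤ, n < a ∨ b < n → IsZero (K.X n)) :
    Nonempty (DerivedCategory.Q.obj K ≅
      ⨁ fun n : Finset.Icc a b =>
        (((DerivedCategory.singleFunctor C 0).obj (K.homology (n : ℤ)))⟦(-(n : ℤ))⟧)) := by
  choose s hs using fun n => exists_map_from_homology hhered K n
  let F : Finset.Icc a b → DerivedCategory C := fun n =>
    (((DerivedCategory.singleFunctor C 0).obj (K.homology (n : ℤ)))⟦(-(n : ℤ))⟧)
  let σ : (⨁ F) ⟶ DerivedCategory.Q.obj K := biproduct.desc (fun n => s n)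
  have hσ : IsIso σ := by
    rw [DerivedCategory.isIso_iff]
    intro m
    let H := DerivedCategory.homologyFunctor C m
    have hsum : ∑ n : Finset.Icc a b,
        H.map (biproduct.π F n) ≫ H.map (biproduct.ι F n) = 𝟙 (H.obj (⨁ F)) := by
      rw [← CategoryTheory.Functor.map_id, ← biproduct.total, Functor.map_sum]
      simp only [Functor.map_comp]
    have hz : ∀ n : Finset.Icc a b, (n : ℤ) ≠ m → IsZero (H.obj (F n)) :=
      fun n hn => isZero_homology_shift_single _ _ _ hn
    by_cases hm : m ∈ Finset.Icc a b
    · have h1 : H.map (biproduct.ι F ⟨m, hm⟩) ≫ H.map (biproduct.π F ⟨m, hm⟩) = 𝟙 _ := by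
        rw [← Functor.map_comp, biproduct.ι_π_self, CategoryTheory.Functor.map_id]
      have h2 : H.map (biproduct.π F ⟨m, hm⟩) ≫ H.map (biproduct.ι F ⟨m, hm⟩) = 𝟙 _ := by
        rw [← hsum, Finset.sum_eq_single ⟨m, hm⟩]
        · intro n _ hn
          rw [(hz n (fun h => hn (Subtype.ext h))).eq_of_tgt (H.map (biproduct.π F n)) 0,
            zero_comp]
        · simp
      have : IsIso (H.map (biproduct.ι F ⟨m, hm⟩)) := ⟨_, h1, h2⟩
      have h3 : H.map (biproduct.ι F ⟨m, hm⟩) ≫ H.map σ = H.map (s m) := by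
        rw [← Functor.map_comp]; simp [σ]
      have := hs m
      exact IsIso.of_isIso_fac_left h3
    · have h1 : IsZero (H.obj (⨁ F)) := by
        rw [IsZero.iff_id_eq_zero, ← hsum]
        refine Finset.sum_eq_zero fun n _ => ?_
        rw [(hz n (fun h => hm (h ▸ n.2))).eq_of_tgt (H.map (biproduct.π F n)) 0, zero_comp]
      have h2 : IsZero (H.obj (DerivedCategory.Q.obj K)) := by
        refine IsZero.of_iso ?_ ((DerivedCategory.homologyFunctorFactors C m).app K)
        refine (HomologicalComplex.exactAt_iff_isZero_homology K m).1 ?_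
        refine ShortComplex.exact_of_isZero_X₂ _ (hK m ?_)
        rw [Finset.mem_Icc] at hm
        lia
      exact ⟨0, h1.eq_of_src _ _, h2.eq_of_src _ _⟩
  exact ⟨(asIso σ).symm⟩
end
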